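/- Let α ≥ 3, β > 0, t₀ > 0, let Φ : H → ℝ be twice continuously differentiable and strongly convex (there exists μ > 0 such that z ↦ Φ(z) − (μ/2)‖z‖² is convex), and let x : [t₀, ∞) → H be a solution of (DIN-AVD). Then argmin Φ is a singleton {x*}, and there exist constants C and T ≥ t₀ such that for all t ≥ T, Φ(x(t)) − min Φ ≤ C·t^{−2α/3} and ‖x(t) − x*‖ ≤ C·t^{−α/3}. -/

import Mathlib

open Filter MeasureTheory Set
open scoped Topology RealInnerProductSpace

variable {H : Type*} [NormedAddCommGroup H] [InnerProductSpace ℝ H] [CompleteSpace H]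

/-- `x`, together with its first and second derivatives `x'`, `x''`, is a twice continuously
differentiable solution of (DIN-AVD) on `[t₀, ∞)`:
`ẍ(t) + (α/t) ẋ(t) + β ∇²Φ(x(t)) ẋ(t) + ∇Φ(x(t)) = 0`. -/
def IsDINAVDSolution (α β t₀ : ℝ) (Φ : H → ℝ) (x x' x'' : ℝ → H) : Prop :=
  (∀ t ∈ Set.Ici t₀, HasDerivAt x (x' t) t) ∧
  (∀ t ∈ Set.Ici t₀, HasDerivAt x' (x'' t) t) ∧
  ContinuousOn x'' (Set.Ici t₀) ∧
  ∀ t ∈ Set.Ici t₀,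
    x'' t + (α / t) • x' t + β • (fderiv ℝ (gradient Φ) (x t)) (x' t)
      + gradient Φ (x t) = 0

/-! With `v = x - z`, where `z` is the minimizer, and `u = (l / t) v + x' + β ∇Φ(x)`, the equation
eliminates both `x''` and the Hessian from `u'`, so that `E = Φ(x) - Φ(z) + ‖u‖² / 2` satisfies
`E' = -((α - l) / t) ‖u‖² - (l / t) ⟪∇Φ(x), v⟫ - β ‖∇Φ(x)‖²` up to multiples of `⟪u, v⟫ / t²` and
`β ⟪u, ∇Φ(x)⟫ / t`. Convexity bounds `⟪∇Φ(x), v⟫` from below by `Φ(x) - Φ(z)`. By Young's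
inequality the cross terms are at most `β ‖∇Φ(x)‖² + O(E / t²)`, because `E` controls `‖u‖²` and,
by strong convexity, `‖v‖²`. Hence `E' ≤ (-l / t + O(1 / t²)) E` as soon as `l ≤ 2 (α - l)`; the
best such `l` is `2 α / 3`. Since `1 / t²` is integrable at infinity, `E = O(t ^ (-l))`. -/

section UniformConvexity

variable {E : Type*} [NormedAddCommGroup E] [NormedSpace ℝ E] {s : Set E} {f : E → ℝ} {a b : E}

theorem slope_le_of_uniformConvexOn {φ : ℝ → ℝ} {r : ℝ} (hf : UniformConvexOn s φ f) (ha : a ∈ s)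
    (hb : b ∈ s) (hr : r ∈ Ioc 0 1) :
    r⁻¹ * (f (a + r • (b - a)) - f a) ≤ f b - f a - (1 - r) * φ ‖a - b‖ := by
  have h := hf.2 ha hb (sub_nonneg.2 hr.2) hr.1.le (sub_add_cancel 1 r)
  rw [show (1 - r) • a + r • b = a + r • (b - a) by module, smul_eq_mul, smul_eq_mul] at h
  rw [inv_mul_le_iff₀ hr.1]
  linarith

theorem add_modulus_le_of_eventually_le_slope {φ g : ℝ → ℝ} {c : ℝ} (hf : UniformConvexOn s φ f)
    (ha : a ∈ s) (hb : b ∈ s) (hg : Tendsto g (𝓝[>] 0) (𝓝 c))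
    (hle : ∀ᶠ r in 𝓝[>] 0, g r ≤ r⁻¹ * (f (a + r • (b - a)) - f a)) :
    f a + c + φ ‖a - b‖ ≤ f b := by
  have bound_tendsto : Tendsto (fun r : ℝ => f b - f a - (1 - r) * φ ‖a - b‖) (𝓝[>] 0)
      (𝓝 (f b - f a - (1 - 0) * φ ‖a - b‖)) :=
    (Continuous.tendsto (by fun_prop) 0).mono_left nhdsWithin_le_nhds
  have g_le : ∀ᶠ r in 𝓝[>] 0, g r ≤ f b - f a - (1 - r) * φ ‖a - b‖ := by
    filter_upwards [hle, Ioc_mem_nhdsGT one_pos] with r hgr hr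
    exact hgr.trans (slope_le_of_uniformConvexOn hf ha hb hr)
  linarith [le_of_tendsto_of_tendsto hg bound_tendsto g_le]

theorem add_lineDeriv_add_modulus_le_of_uniformConvexOn {φ : ℝ → ℝ} {f' : ℝ}
    (hf : UniformConvexOn s φ f) (ha : a ∈ s) (hb : b ∈ s)
    (hf' : HasLineDerivAt ℝ f f' a (b - a)) :
    f a + f' + φ ‖a - b‖ ≤ f b :=
  add_modulus_le_of_eventually_le_slope hf ha hb hf'.tendsto_slope_zero_right
    (Eventually.of_forall fun _ => le_rfl)

theorem add_modulus_le_of_uniformConvexOn_of_isMinOn {φ : ℝ → ℝ} (hf : UniformConvexOn s φ f)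
    (ha : a ∈ s) (hb : b ∈ s) (hmin : IsMinOn f s a) : f a + φ ‖a - b‖ ≤ f b := by
  have slope_nonneg : ∀ᶠ r : ℝ in 𝓝[>] 0, 0 ≤ r⁻¹ * (f (a + r • (b - a)) - f a) := by
    filter_upwards [Ioc_mem_nhdsGT one_pos] with r hr
    have mem : a + r • (b - a) ∈ s := hf.1.add_smul_sub_mem ha hb (Ioc_subset_Icc_self hr)
    exact mul_nonneg (inv_nonneg.2 hr.1.le) (sub_nonneg.2 (hmin mem))
  simpa using add_modulus_le_of_eventually_le_slope hf ha hb tendsto_const_nhds slope_nonneg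

theorem bddBelow_image_of_strongConvexOn {m : ℝ} {f' : E →L[ℝ] ℝ} (hm : 0 < m)
    (hf : StrongConvexOn s m f) (ha : a ∈ s) (hf' : HasFDerivAt f f' a) : BddBelow (f '' s) := by
  refine ⟨f a - ‖f'‖ ^ 2 / (2 * m), forall_mem_image.2 fun w hw => ?_⟩
  have first_order : f a + f' (w - a) + m / 2 * ‖a - w‖ ^ 2 ≤ f w :=
    add_lineDeriv_add_modulus_le_of_uniformConvexOn hf ha hw (hf'.hasLineDerivAt _)
  have linear_part : -(‖f'‖ * ‖a - w‖) ≤ f' (w - a) :=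
    neg_le_of_abs_le (norm_sub_rev a w ▸ f'.le_opNorm (w - a))
  have complete_square : ‖f'‖ ^ 2 / (2 * m) - ‖f'‖ * ‖a - w‖ + m / 2 * ‖a - w‖ ^ 2
      = (‖f'‖ - m * ‖a - w‖) ^ 2 / (2 * m) := by
    field_simp
    ring
  have : 0 ≤ (‖f'‖ - m * ‖a - w‖) ^ 2 / (2 * m) := by positivity
  linarith

theorem norm_sub_sq_le_of_strongConvexOn {m c : ℝ} (hm : 0 < m) (hf : StrongConvexOn s m f)
    (hc : c ∈ lowerBounds (f '' s)) (ha : a ∈ s) (hb : b ∈ s) :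
    ‖a - b‖ ^ 2 ≤ 8 / m * ((f a + f b) / 2 - c) := by
  have half_nonneg : (0 : ℝ) ≤ 1 / 2 := by norm_num
  have midpoint_le := hf.2 ha hb half_nonneg half_nonneg (add_halves 1)
  have le_midpoint := hc (mem_image_of_mem f (hf.1 ha hb half_nonneg half_nonneg (add_halves 1)))
  simp only [smul_eq_mul] at midpoint_le
  rw [div_mul_eq_mul_div, le_div_iff₀ hm]
  linarith

theorem exists_isMinOn_of_strongConvexOn [CompleteSpace E] {m : ℝ} (hs : IsClosed s)
    (hne : s.Nonempty) (hm : 0 < m) (hf : StrongConvexOn s m f) (hlsc : LowerSemicontinuousOn f s)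
    (hbdd : BddBelow (f '' s)) : ∃ z ∈ s, IsMinOn f s z := by
  have sInf_le : sInf (f '' s) ∈ lowerBounds (f '' s) := fun _ => csInf_le hbdd
  obtain ⟨v, v_anti, v_tendsto, v_mem⟩ := exists_seq_tendsto_sInf (hne.image f) hbdd
  choose y y_mem y_eq using v_mem
  have y_cauchy : CauchySeq y := by
    refine cauchySeq_of_le_tendsto_0 (fun n => √(8 / m * (v n - sInf (f '' s)))) ?_ ?_
    · intro i j n hi hj
      rw [dist_eq_norm]
      refine Real.le_sqrt_of_sq_le
        ((norm_sub_sq_le_of_strongConvexOn hm hf sInf_le (y_mem i) (y_mem j)).trans ?_)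
      rw [y_eq, y_eq]
      gcongr
      linarith [v_anti hi, v_anti hj]
    · simpa using ((v_tendsto.sub_const (sInf (f '' s))).const_mul (8 / m)).sqrt
  obtain ⟨z, y_tendsto⟩ := cauchySeq_tendsto_of_complete y_cauchy
  have z_mem : z ∈ s := hs.mem_of_tendsto y_tendsto (.of_forall y_mem)
  have y_tendsto_within : Tendsto y atTop (𝓝[s] z) :=
    tendsto_nhdsWithin_iff.2 ⟨y_tendsto, .of_forall y_mem⟩
  have le_sInf : f z ≤ sInf (f '' s) := by
    refine le_of_forall_lt_imp_le_of_dense fun c hc => ge_of_tendsto v_tendsto ?_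
    filter_upwards [y_tendsto_within.eventually (hlsc z z_mem c hc)] with n hn
    exact y_eq n ▸ hn.le
  exact ⟨z, z_mem, fun w hw => le_sInf.trans (sInf_le (mem_image_of_mem f hw))⟩

theorem existsUnique_isMinOn_of_strongConvexOn [CompleteSpace E] {m : ℝ} (hm : 0 < m)
    (hf : StrongConvexOn univ m f) (hd : Differentiable ℝ f) : ∃! z, IsMinOn f univ z := by
  obtain ⟨z, -, z_min⟩ := exists_isMinOn_of_strongConvexOn isClosed_univ univ_nonempty hm hf
    (hd.continuous.lowerSemicontinuous.lowerSemicontinuousOn univ)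
    (bddBelow_image_of_strongConvexOn hm hf (mem_univ 0) (hd 0).hasFDerivAt)
  exact ⟨z, z_min, fun w w_min =>
    (hf.strictConvexOn hm).eq_of_isMinOn w_min z_min (mem_univ w) (mem_univ z)⟩

end UniformConvexity

section Gradient

variable {Φ : H → ℝ}

theorem sub_le_inner_gradient_of_convexOn {s : Set H} {a b : H} (hΦ : ConvexOn ℝ s Φ)
    (ha : a ∈ s) (hb : b ∈ s) (hd : DifferentiableAt ℝ Φ a) :
    Φ a - Φ b ≤ ⟪gradient Φ a, a - b⟫ := by
  have first_order := add_lineDeriv_add_modulus_le_of_uniformConvexOn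
    (uniformConvexOn_zero.2 hΦ) ha hb (hd.hasFDerivAt.hasLineDerivAt (b - a))
  rw [← inner_gradient_left, ← neg_sub a b, inner_neg_right, Pi.zero_apply] at first_order
  linarith

theorem differentiable_gradient (hΦ : ContDiff ℝ 2 Φ) : Differentiable ℝ (gradient Φ) :=
  (InnerProductSpace.toDual ℝ H).symm.toContinuousLinearEquiv.differentiable.comp
    ((hΦ.fderiv_right (m := 1) (by norm_num)).differentiable one_ne_zero)

end Gradient

section Gronwall

variable {F F' : ℝ → ℝ}

theorem antitoneOn_exp_neg_mul_of_deriv_le_mul {A A' : ℝ → ℝ} {D : Set ℝ} (hD : Convex ℝ D)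
    (hF : ∀ t ∈ D, HasDerivAt F (F' t) t) (hA : ∀ t ∈ D, HasDerivAt A (A' t) t)
    (hle : ∀ t ∈ D, F' t ≤ A' t * F t) :
    AntitoneOn (fun t => Real.exp (-A t) * F t) D := by
  have deriv_weighted : ∀ t ∈ D, HasDerivAt (fun t => Real.exp (-A t) * F t)
      (Real.exp (-A t) * (F' t - A' t * F t)) t := fun t ht =>
    ((hA t ht).neg.exp.mul (hF t ht)).congr_deriv (by simp only [Pi.neg_apply]; ring)
  refine antitoneOn_of_hasDerivWithinAt_nonpos hD
    (fun t ht => (deriv_weighted t ht).continuousAt.continuousWithinAt)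
    (fun t ht => (deriv_weighted t (interior_subset ht)).hasDerivWithinAt) fun t ht => ?_
  exact mul_nonpos_of_nonneg_of_nonpos (Real.exp_nonneg _)
    (sub_nonpos.2 (hle t (interior_subset ht)))

theorem exists_le_mul_rpow_neg_of_deriv_le {a l K : ℝ} (ha : 0 < a)
    (hF : ∀ t ∈ Ici a, HasDerivAt F (F' t) t)
    (hle : ∀ t ∈ Ici a, F' t ≤ (-(l / t) + K / t ^ 2) * F t) :
    ∃ C, ∀ t ∈ Ici a, F t ≤ C * t ^ (-l) := by
  let A : ℝ → ℝ := fun t => -(l * Real.log t) - K / t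
  have deriv_A : ∀ t ∈ Ici a, HasDerivAt A (-(l / t) + K / t ^ 2) t := fun t ht => by
    have t_ne : t ≠ 0 := (ha.trans_le ht).ne'
    refine ((Real.hasDerivAt_log t_ne).const_mul l).neg.sub
      ((hasDerivAt_inv t_ne).const_mul K) |>.congr_deriv ?_
    ring
  have weighted_antitone := antitoneOn_exp_neg_mul_of_deriv_le_mul (convex_Ici a) hF deriv_A hle
  refine ⟨Real.exp (-A a) * |F a| * Real.exp (|K| / a), fun t ht => ?_⟩
  have t_pos : 0 < t := ha.trans_le ht
  have exp_A_le : Real.exp (A t) ≤ Real.exp (|K| / a) * t ^ (-l) := by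
    rw [Real.rpow_def_of_pos t_pos, ← Real.exp_add, Real.exp_le_exp]
    have : -K / t ≤ |K| / a := div_le_div₀ (abs_nonneg K) (neg_le_abs K) ha ht
    simp only [A]
    linarith [neg_div t K]
  calc F t = Real.exp (-A t) * F t * Real.exp (A t) := by
        rw [mul_right_comm, ← Real.exp_add, neg_add_cancel, Real.exp_zero, one_mul]
    _ ≤ Real.exp (-A a) * F a * Real.exp (A t) := by
        gcongr ?_ * _
        exact weighted_antitone self_mem_Ici ht ht
    _ ≤ Real.exp (-A a) * |F a| * (Real.exp (|K| / a) * t ^ (-l)) := by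
        gcongr
        exact le_abs_self _
    _ = Real.exp (-A a) * |F a| * Real.exp (|K| / a) * t ^ (-l) := (mul_assoc _ _ _).symm

end Gronwall

section CrossTerms

variable {E : Type*} [NormedAddCommGroup E] [InnerProductSpace ℝ E]

theorem mul_inner_le_norm_sq_add (c : ℝ) (u v : E) :
    c * ⟪u, v⟫ ≤ ‖v‖ ^ 2 + c ^ 2 / 4 * ‖u‖ ^ 2 := by
  have complete_square : ‖v - (c / 2) • u‖ ^ 2 = ‖v‖ ^ 2 - c * ⟪u, v⟫ + c ^ 2 / 4 * ‖u‖ ^ 2 := by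
    rw [norm_sub_sq_real, inner_smul_right, real_inner_comm, norm_smul, mul_pow, Real.norm_eq_abs,
      sq_abs]
    ring
  linarith [sq_nonneg ‖v - (c / 2) • u‖]

theorem dissipation_le {α β μ l t W : ℝ} {u v g : E} (hβ : 0 ≤ β) (hμ : 0 < μ) (hl : 0 ≤ l)
    (hlα : l ≤ 2 * (α - l)) (ht : 0 < t) (hW : W ≤ ⟪g, v⟫) (hv : μ / 2 * ‖v‖ ^ 2 ≤ W) (c : ℝ) :
    -((α - l) / t) * ‖u‖ ^ 2 + c / t ^ 2 * ⟪u, v⟫ + β * ((α - l) / t * ⟪u, g⟫)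
        - l / t * ⟪g, v⟫ - β * ‖g‖ ^ 2
      ≤ (-(l / t) + (2 / μ + c ^ 2 / 2 + β * (α - l) ^ 2 / 2) / t ^ 2) * (W + ‖u‖ ^ 2 / 2) := by
  have W_nonneg : 0 ≤ W := le_trans (by positivity) hv
  have v_sq_le : ‖v‖ ^ 2 ≤ 2 / μ * W := by
    rw [div_mul_eq_mul_div, le_div_iff₀ hμ]
    linarith
  have damping : l / (2 * t) * ‖u‖ ^ 2 ≤ (α - l) / t * ‖u‖ ^ 2 := by
    gcongr ?_ * _
    rw [div_le_div_iff₀ (by positivity) ht]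
    nlinarith
  have cross_uv : c / t ^ 2 * ⟪u, v⟫ ≤ (2 / μ * W + c ^ 2 / 4 * ‖u‖ ^ 2) / t ^ 2 := by
    rw [div_mul_eq_mul_div]
    gcongr
    linarith [mul_inner_le_norm_sq_add c u v]
  have cross_ug : β * ((α - l) / t * ⟪u, g⟫)
      ≤ β * (‖g‖ ^ 2 + ((α - l) / t) ^ 2 / 4 * ‖u‖ ^ 2) := by
    gcongr
    exact mul_inner_le_norm_sq_add _ u g
  have convexity : l / t * W ≤ l / t * ⟪g, v⟫ := by gcongr
  have slack_nonneg :
      0 ≤ (2 / μ * (‖u‖ ^ 2 / 2) + (c ^ 2 / 2 + β * (α - l) ^ 2 / 2) * W) / t ^ 2 := by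
    positivity
  have expansion :
      (-(l / t) + (2 / μ + c ^ 2 / 2 + β * (α - l) ^ 2 / 2) / t ^ 2) * (W + ‖u‖ ^ 2 / 2)
        = -(l / (2 * t) * ‖u‖ ^ 2) + (2 / μ * W + c ^ 2 / 4 * ‖u‖ ^ 2) / t ^ 2
          + β * (((α - l) / t) ^ 2 / 4 * ‖u‖ ^ 2) - l / t * W
          + (2 / μ * (‖u‖ ^ 2 / 2) + (c ^ 2 / 2 + β * (α - l) ^ 2 / 2) * W) / t ^ 2 := by
    field_simp
    ring
  linarith

end CrossTerms

namespace IsDINAVDSolution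

variable {α β μ t₀ l t : ℝ} {Φ : H → ℝ} {x x' x'' : ℝ → H} {z : H}

/-- The vector `u(t) = (l / t) (x(t) - z) + ẋ(t) + β ∇Φ(x(t))`, whose square is the quadratic part
of the Lyapunov function `energy`. The curve `x'` stands for the derivative of `x`. -/
noncomputable def momentum (β l : ℝ) (Φ : H → ℝ) (z : H) (x x' : ℝ → H) (t : ℝ) : H :=
  (l / t) • (x t - z) + x' t + β • gradient Φ (x t)

/-- The Lyapunov function `Φ(x(t)) - Φ(z) + ‖u(t)‖² / 2`, where `u` is the `momentum`; `z` is meant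
to be a minimizer of `Φ`. -/
noncomputable def energy (β l : ℝ) (Φ : H → ℝ) (z : H) (x x' : ℝ → H) (t : ℝ) : ℝ :=
  Φ (x t) - Φ z + ‖momentum β l Φ z x x' t‖ ^ 2 / 2

theorem hasDerivAt_momentum (hsol : IsDINAVDSolution α β t₀ Φ x x' x'')
    (hd : DifferentiableAt ℝ (gradient Φ) (x t)) (ht : t ∈ Ici t₀) (t_pos : 0 < t) :
    HasDerivAt (momentum β l Φ z x x')
      (-((α - l) / t) • momentum β l Φ z x x' t + (l * (α - l - 1) / t ^ 2) • (x t - z)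
        + (β * ((α - l) / t) - 1) • gradient Φ (x t)) t := by
  obtain ⟨hx, hx', -, equation⟩ := hsol
  have deriv_coeff : HasDerivAt (fun t => l / t) (-l / t ^ 2) t := by
    simpa [div_eq_mul_inv] using (hasDerivAt_inv t_pos.ne').const_mul l
  have deriv_gradient : HasDerivAt (fun t => gradient Φ (x t))
      (fderiv ℝ (gradient Φ) (x t) (x' t)) t :=
    hd.hasFDerivAt.comp_hasDerivAt t (hx t ht)
  have eliminated : x'' t + β • fderiv ℝ (gradient Φ) (x t) (x' t)
      = -(α / t) • x' t - gradient Φ (x t) := by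
    rw [← sub_eq_zero, ← equation t ht]
    module
  refine ((deriv_coeff.smul ((hx t ht).sub_const z)).add (hx' t ht)).add
    (deriv_gradient.const_smul β) |>.congr_deriv ?_
  rw [add_assoc, eliminated, momentum]
  match_scalars <;> field_simp <;> ring

theorem hasDerivAt_energy (hsol : IsDINAVDSolution α β t₀ Φ x x' x'')
    (hd : DifferentiableAt ℝ Φ (x t)) (hd' : DifferentiableAt ℝ (gradient Φ) (x t))
    (ht : t ∈ Ici t₀) (t_pos : 0 < t) :
    HasDerivAt (energy β l Φ z x x')
      (-((α - l) / t) * ‖momentum β l Φ z x x' t‖ ^ 2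
        + l * (α - l - 1) / t ^ 2 * ⟪momentum β l Φ z x x' t, x t - z⟫
        + β * ((α - l) / t * ⟪momentum β l Φ z x x' t, gradient Φ (x t)⟫)
        - l / t * ⟪gradient Φ (x t), x t - z⟫ - β * ‖gradient Φ (x t)‖ ^ 2) t := by
  have deriv_value : HasDerivAt (fun t => Φ (x t)) ⟪gradient Φ (x t), x' t⟫ t :=
    inner_gradient_left (𝕜 := ℝ) (f := Φ) ▸ hd.hasFDerivAt.comp_hasDerivAt t (hsol.1 t ht)
  have deriv_square := (hsol.hasDerivAt_momentum (l := l) (z := z) hd' ht t_pos).norm_sq.div_const 2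
  refine ((deriv_value.sub_const (Φ z)).add deriv_square).congr_deriv ?_
  have velocity : x' t
      = momentum β l Φ z x x' t - (l / t) • (x t - z) - β • gradient Φ (x t) := by
    simp only [momentum]
    abel
  generalize momentum β l Φ z x x' t = u at velocity ⊢
  rw [velocity]
  simp only [inner_add_right, inner_sub_right, inner_smul_right, real_inner_self_eq_norm_sq]
  rw [real_inner_comm u (gradient Φ (x t))]
  ring

theorem exists_energy_le_rpow (hsol : IsDINAVDSolution α β t₀ Φ x x' x'') (ht₀ : 0 < t₀)
    (hβ : 0 ≤ β) (hl : 0 ≤ l) (hlα : l ≤ 2 * (α - l)) (hd : Differentiable ℝ Φ)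
    (hd' : Differentiable ℝ (gradient Φ)) (hconv : ConvexOn ℝ univ Φ) (hμ : 0 < μ)
    (hz : ∀ w, μ / 2 * ‖w - z‖ ^ 2 ≤ Φ w - Φ z) :
    ∃ C, ∀ t ∈ Ici t₀, energy β l Φ z x x' t ≤ C * t ^ (-l) :=
  exists_le_mul_rpow_neg_of_deriv_le ht₀
    (fun t ht => hsol.hasDerivAt_energy (hd (x t)) (hd' (x t)) ht (ht₀.trans_le ht))
    fun t ht => dissipation_le hβ hμ hl hlα (ht₀.trans_le ht)
      (sub_le_inner_gradient_of_convexOn hconv (mem_univ _) (mem_univ z) (hd (x t))) (hz (x t)) _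

theorem exists_sub_le_rpow_and_norm_sub_le_rpow (hsol : IsDINAVDSolution α β t₀ Φ x x' x'')
    (ht₀ : 0 < t₀) (hβ : 0 ≤ β) (hl : 0 ≤ l) (hlα : l ≤ 2 * (α - l)) (hd : Differentiable ℝ Φ)
    (hd' : Differentiable ℝ (gradient Φ)) (hconv : ConvexOn ℝ univ Φ) (hμ : 0 < μ)
    (hz : ∀ w, μ / 2 * ‖w - z‖ ^ 2 ≤ Φ w - Φ z) :
    ∃ C, ∀ t ∈ Ici t₀, Φ (x t) - Φ z ≤ C * t ^ (-l) ∧ ‖x t - z‖ ≤ C * t ^ (-l / 2) := by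
  obtain ⟨C, hC⟩ := hsol.exists_energy_le_rpow ht₀ hβ hl hlα hd hd' hconv hμ hz
  refine ⟨max C √(2 / μ * C), fun t ht => ?_⟩
  have t_pos : 0 < t := ht₀.trans_le ht
  have value_le : Φ (x t) - Φ z ≤ C * t ^ (-l) :=
    (le_add_of_nonneg_right (by positivity)).trans (hC t ht)
  have dist_sq_le : ‖x t - z‖ ^ 2 ≤ 2 / μ * C * t ^ (-l) := by
    rw [mul_assoc, div_mul_eq_mul_div, le_div_iff₀ hμ]
    linarith [hz (x t)]
  have sqrt_rpow : √(t ^ (-l)) = t ^ (-l / 2) := by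
    rw [Real.rpow_div_two_eq_sqrt _ t_pos.le, Real.sqrt_eq_rpow, Real.sqrt_eq_rpow,
      ← Real.rpow_mul t_pos.le, ← Real.rpow_mul t_pos.le, mul_comm]
  constructor
  · exact value_le.trans (by gcongr; exact le_max_left _ _)
  · calc ‖x t - z‖ ≤ √(2 / μ * C * t ^ (-l)) := Real.le_sqrt_of_sq_le dist_sq_le
      _ = √(2 / μ * C) * t ^ (-l / 2) := by rw [Real.sqrt_mul' _ (by positivity), sqrt_rpow]
      _ ≤ max C √(2 / μ * C) * t ^ (-l / 2) := by gcongr; exact le_max_right _ _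

end IsDINAVDSolution

theorem stmt15_general {α β t₀ μ : ℝ} {Φ : H → ℝ} {x x' x'' : ℝ → H} (hα : 0 ≤ α) (hβ : 0 ≤ β)
    (ht₀ : 0 < t₀) (hd : Differentiable ℝ Φ) (hd' : Differentiable ℝ (gradient Φ)) (hμ : 0 < μ)
    (hsc : StrongConvexOn univ μ Φ) (hsol : IsDINAVDSolution α β t₀ Φ x x' x'') :
    ∃ xstar : H, (∀ w, Φ xstar ≤ Φ w) ∧ (∀ z : H, (∀ w, Φ z ≤ Φ w) → z = xstar) ∧
      ∃ C, ∀ t, t₀ ≤ t →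
        Φ (x t) - Φ xstar ≤ C * t ^ (-(2 * α) / 3) ∧
        ‖x t - xstar‖ ≤ C * t ^ (-α / 3) := by
  obtain ⟨z, z_min, z_unique⟩ := existsUnique_isMinOn_of_strongConvexOn hμ hsc hd
  have growth (w : H) : μ / 2 * ‖w - z‖ ^ 2 ≤ Φ w - Φ z := by
    rw [norm_sub_rev]
    exact le_sub_iff_add_le'.2 (add_modulus_le_of_uniformConvexOn_of_isMinOn hsc (mem_univ z)
      (mem_univ w) z_min)
  obtain ⟨C, hC⟩ := hsol.exists_sub_le_rpow_and_norm_sub_le_rpow (l := 2 * α / 3) ht₀ hβ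
    (by positivity) (by linarith) hd hd' (hsc.strictConvexOn hμ).convexOn hμ growth
  refine ⟨z, isMinOn_univ_iff.1 z_min, fun w hw => z_unique w (isMinOn_univ_iff.2 hw), C, ?_⟩
  intro t ht
  convert hC t ht using 4 <;> ring

theorem stmt15 (α β t₀ : ℝ) (hα : 3 ≤ α) (hβ : 0 < β) (ht₀ : 0 < t₀)
    (Φ : H → ℝ) (hΦ : ContDiff ℝ 2 Φ)
    (μ : ℝ) (hμ : 0 < μ)
    (hsc : ConvexOn ℝ Set.univ (fun z : H => Φ z - μ / 2 * ‖z‖ ^ 2))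
    (x x' x'' : ℝ → H) (hsol : IsDINAVDSolution α β t₀ Φ x x' x'') :
    ∃ xstar : H, (∀ w, Φ xstar ≤ Φ w) ∧ (∀ z : H, (∀ w, Φ z ≤ Φ w) → z = xstar) ∧
      ∃ C T : ℝ, t₀ ≤ T ∧ ∀ t, T ≤ t →
        Φ (x t) - Φ xstar ≤ C * t ^ (-(2 * α) / 3) ∧
        ‖x t - xstar‖ ≤ C * t ^ (-α / 3) := by
  obtain ⟨z, z_min, z_unique, C, hC⟩ := stmt15_general (by linarith) hβ.le ht₀
    (hΦ.differentiable two_ne_zero) (differentiable_gradient hΦ) hμ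
    (strongConvexOn_iff_convex.2 hsc) hsol
  exact ⟨z, z_min, z_unique, C, t₀, le_rfl, hC⟩
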